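/- Operator geometric mean SDP characterization: for positive definite matrices A and B, the geometric mean G_{1/2}(A, B) = A^{1/2}(A^{−1/2} B A^{−1/2})^{1/2} A^{1/2} is the maximum, in the Loewner order, over all positive semidefinite X such that the block matrix [[B, X], [X, A]] is positive semidefinite. -/

import Mathlib

/-!
Write `S = A^{1/2}`, `T = A^{-1/2}`, `C = T B T`, `R = C^{1/2}`, so that `G = S R S`. By the Schur
complement, `[[B, X], [X, A]] ≥ 0` means `X A⁻¹ X ≤ B` (`fromBlocks_posSemidef_iff`). Since
`A⁻¹ = T T` and `T` inverts `S`, `G A⁻¹ G = S R² S = S C S = B`, so `G` is feasible. If `X` is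
feasible, then `Y = T X T` satisfies `Y² = T (X A⁻¹ X) T ≤ C = R²`, and the operator monotonicity
of the square root (`sub_posSemidef_of_sq`) gives `Y ≤ R`; conjugating by `S` gives `X ≤ G`.
-/

open Matrix
open scoped ComplexOrder

/-- Functional calculus for Hermitian matrices: apply `f` to the eigenvalues. -/
noncomputable def matFun {d : Type*} [Fintype d] [DecidableEq d]
    (A : Matrix d d ℂ) (f : ℝ → ℝ) : Matrix d d ℂ :=
  if hA : A.IsHermitian then
    (hA.eigenvectorUnitary : Matrix d d ℂ) *
      Matrix.diagonal (fun i => (f (hA.eigenvalues i) : ℂ)) *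
      (star hA.eigenvectorUnitary : Matrix d d ℂ)
  else 0

/-- Real matrix power of a Hermitian matrix via the functional calculus. -/
noncomputable def mrpow {d : Type*} [Fintype d] [DecidableEq d]
    (A : Matrix d d ℂ) (r : ℝ) : Matrix d d ℂ :=
  matFun A (fun x => x ^ r)

/-- The operator geometric mean `G_{1/2}(A, B) = A^{1/2} (A^{-1/2} B A^{-1/2})^{1/2} A^{1/2}`. -/
noncomputable def geomMeanHalf {d : Type*} [Fintype d] [DecidableEq d]
    (A B : Matrix d d ℂ) : Matrix d d ℂ :=
  mrpow A (1 / 2) * mrpow (mrpow A (-(1 / 2)) * B * mrpow A (-(1 / 2))) (1 / 2) *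
    mrpow A (1 / 2)

section FunctionalCalculus

variable {d : Type*} [Fintype d] [DecidableEq d] {A : Matrix d d ℂ}

lemma matFun_mul (hA : A.IsHermitian) (f g : ℝ → ℝ) :
    matFun A f * matFun A g = matFun A (fun x => f x * g x) := by
  have hU : (star hA.eigenvectorUnitary : Matrix d d ℂ) * hA.eigenvectorUnitary = 1 :=
    Unitary.coe_star_mul_self _
  simp only [matFun, dif_pos hA]
  simp only [Complex.ofReal_mul, ← Matrix.diagonal_mul_diagonal]
  simp only [Matrix.mul_assoc]
  rw [← Matrix.mul_assoc _ (hA.eigenvectorUnitary : Matrix d d ℂ) _, hU, Matrix.one_mul]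

lemma matFun_id (hA : A.IsHermitian) : matFun A (fun x => x) = A := by
  conv_rhs => rw [hA.spectral_theorem, Unitary.conjStarAlgAut_apply]
  simp only [matFun, dif_pos hA]
  rfl

lemma matFun_one (hA : A.IsHermitian) : matFun A (fun _ => 1) = 1 := by
  simp [matFun, dif_pos hA]

/-- `matFun A f` depends only on the values of `f` at the eigenvalues of `A`. -/
lemma matFun_congr (hA : A.IsHermitian) {f g : ℝ → ℝ}
    (h : ∀ i, f (hA.eigenvalues i) = g (hA.eigenvalues i)) : matFun A f = matFun A g := by
  simp only [matFun, dif_pos hA, h]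

lemma mrpow_posSemidef (hA : A.PosSemidef) (r : ℝ) : (mrpow A r).PosSemidef := by
  simp only [mrpow, matFun, dif_pos hA.1]
  refine Matrix.PosSemidef.mul_mul_conjTranspose_same (Matrix.posSemidef_diagonal_iff.2 fun i => ?_)
    (hA.1.eigenvectorUnitary : Matrix d d ℂ)
  exact_mod_cast Real.rpow_nonneg (hA.eigenvalues_nonneg i) r

lemma mrpow_half_mul_self (hA : A.PosSemidef) : mrpow A (1 / 2) * mrpow A (1 / 2) = A := by
  rw [mrpow, matFun_mul hA.1]
  conv_rhs => rw [← matFun_id hA.1]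
  refine matFun_congr hA.1 fun i => ?_
  rw [← Real.sqrt_eq_rpow, Real.mul_self_sqrt (hA.eigenvalues_nonneg i)]

lemma mrpow_half_mul_neg_half (hA : A.PosDef) : mrpow A (1 / 2) * mrpow A (-(1 / 2)) = 1 := by
  rw [mrpow, mrpow, matFun_mul hA.1]
  conv_rhs => rw [← matFun_one hA.1]
  refine matFun_congr hA.1 fun i => ?_
  rw [← Real.rpow_add (hA.eigenvalues_pos i), add_neg_cancel, Real.rpow_zero]

end FunctionalCalculus

/-- Operator monotonicity of the square root: if `Y² ≤ R²` with `R ≥ 0` and `Y` Hermitian, then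
`Y ≤ R`. At a unit eigenvector `v` of `D = R - Y` with eigenvalue `l`, the form of
`R² - Y² = R D + D R - D²` is `2 l ⟨v, R v⟩ - l²`, which is negative when `l < 0`. -/
lemma sub_posSemidef_of_sq {d : Type*} [Fintype d] [DecidableEq d] {R Y : Matrix d d ℂ}
    (hR : R.PosSemidef) (hY : Y.IsHermitian) (h : (R * R - Y * Y).PosSemidef) :
    (R - Y).PosSemidef := by
  have hD : (R - Y).IsHermitian := hR.1.sub hY
  rw [hD.posSemidef_iff_eigenvalues_nonneg]
  intro i
  by_contra hneg
  set l := hD.eigenvalues i with hl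
  have hlneg : l < 0 := not_le.1 hneg
  set v : d → ℂ := ⇑(hD.eigenvectorBasis i) with hv
  have hDv : (R - Y) *ᵥ v = (l : ℂ) • v := by
    rw [hv, hD.mulVec_eigenvectorBasis i]
    rfl
  have hvv : star v ⬝ᵥ v = 1 := by
    have h1 := (orthonormal_iff_ite.1 hD.eigenvectorBasis.orthonormal) i i
    rw [if_pos rfl, EuclideanSpace.inner_eq_star_dotProduct, dotProduct_comm] at h1
    exact h1
  have hvD : star v ᵥ* (R - Y) = (l : ℂ) • star v := by
    have h1 := congrArg star hDv
    rw [star_mulVec, hD.eq, star_smul] at h1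
    simpa using h1
  have key := h.dotProduct_mulVec_nonneg v
  have e : R * R - Y * Y = R * (R - Y) + (R - Y) * R - (R - Y) * (R - Y) := by noncomm_ring
  have hq := hR.dotProduct_mulVec_nonneg v
  have e2 : star v ⬝ᵥ ((R * R - Y * Y) *ᵥ v)
      = 2 * (l : ℂ) * (star v ⬝ᵥ (R *ᵥ v)) - (l : ℂ) * l := by
    rw [e, sub_mulVec, add_mulVec, ← mulVec_mulVec, ← mulVec_mulVec, ← mulVec_mulVec, hDv,
      dotProduct_sub, dotProduct_add, dotProduct_mulVec _ (R - Y) (R *ᵥ v),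
      hvD, mulVec_smul, mulVec_smul, hDv]
    simp only [dotProduct_smul, smul_dotProduct, hvv, smul_eq_mul]
    ring
  rw [e2] at key
  have k1 := (Complex.le_def.1 key).1
  have q1 := (Complex.le_def.1 hq).1
  simp at k1 q1
  nlinarith [mul_pos_of_neg_of_neg hlneg hlneg]

lemma fromBlocks_posSemidef_iff {d : Type*} [Fintype d] [DecidableEq d] {A B X : Matrix d d ℂ}
    (hA : A.PosDef) (hX : X.IsHermitian) :
    (Matrix.fromBlocks B X X A).PosSemidef ↔ (B - X * A⁻¹ * X).PosSemidef := by
  have : Invertible A := hA.isUnit.invertible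
  have h := Matrix.PosDef.fromBlocks₂₂ B X hA
  rwa [hX.eq] at h

/-- **SDP characterization of the operator geometric mean.** For positive definite `A, B`,
`G_{1/2}(A, B)` is the Loewner-maximum over all positive semidefinite `X` such that the
block matrix `[[B, X], [X, A]]` is positive semidefinite. -/
theorem geomMean_sdp_characterization {n : ℕ}
    (A B : Matrix (Fin n) (Fin n) ℂ) (hA : A.PosDef) (hB : B.PosDef) :
    (Matrix.fromBlocks B (geomMeanHalf A B) (geomMeanHalf A B) A).PosSemidef ∧
    ∀ X : Matrix (Fin n) (Fin n) ℂ, X.PosSemidef →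
      (Matrix.fromBlocks B X X A).PosSemidef → (geomMeanHalf A B - X).PosSemidef := by
  set S := mrpow A (1 / 2) with hS
  set T := mrpow A (-(1 / 2)) with hT
  have hSH : Sᴴ = S := (mrpow_posSemidef hA.posSemidef _).1
  have hTH : Tᴴ = T := (mrpow_posSemidef hA.posSemidef _).1
  have hSS : S * S = A := mrpow_half_mul_self hA.posSemidef
  have hST : S * T = 1 := mrpow_half_mul_neg_half hA
  have hTS : T * S = 1 := mul_eq_one_comm.1 hST
  have hAinv : A⁻¹ = T * T := by
    refine Matrix.inv_eq_right_inv ?_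
    rw [← hSS, Matrix.mul_assoc, ← Matrix.mul_assoc S T T, hST, Matrix.one_mul, hST]
  have hC : (T * B * T).PosSemidef := by
    simpa only [hTH] using hB.posSemidef.mul_mul_conjTranspose_same T
  set R := mrpow (T * B * T) (1 / 2) with hRdef
  have hR : R.PosSemidef := mrpow_posSemidef hC _
  have hRR : R * R = T * B * T := mrpow_half_mul_self hC
  have hG : geomMeanHalf A B = S * R * S := rfl
  have hGH : (S * R * S).IsHermitian := by
    have h := hR.mul_mul_conjTranspose_same S
    rw [hSH] at h
    exact h.1
  rw [hG]
  constructor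
  · rw [fromBlocks_posSemidef_iff hA hGH, hAinv]
    have e : S * R * S * (T * T) * (S * R * S) = B := by
      calc S * R * S * (T * T) * (S * R * S)
          = S * R * (S * T) * (T * S) * R * S := by simp only [Matrix.mul_assoc]
        _ = S * (R * R) * S := by rw [hST, hTS]; simp only [Matrix.mul_assoc, Matrix.mul_one]
        _ = (S * T) * B * (T * S) := by rw [hRR]; simp only [Matrix.mul_assoc]
        _ = B := by rw [hST, hTS, Matrix.one_mul, Matrix.mul_one]
    rw [e, sub_self]
    exact Matrix.PosSemidef.zero
  · intro X hX hblk
    rw [fromBlocks_posSemidef_iff hA hX.1, hAinv] at hblk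
    have hY : (T * X * T).IsHermitian := by
      have h := hX.mul_mul_conjTranspose_same T
      rw [hTH] at h
      exact h.1
    have hsq : (R * R - (T * X * T) * (T * X * T)).PosSemidef := by
      have h := hblk.mul_mul_conjTranspose_same T
      rw [hTH] at h
      convert h using 1
      rw [hRR]
      noncomm_ring
    have h := (sub_posSemidef_of_sq hR hY hsq).mul_mul_conjTranspose_same S
    rw [hSH] at h
    convert h using 1
    calc S * R * S - X = S * R * S - (S * T) * X * (T * S) := by
          rw [hST, hTS, Matrix.one_mul, Matrix.mul_one]
      _ = S * (R - T * X * T) * S := by noncomm_ring
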